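/- Let U ⊆ Σ(X,P) be a set containing at least one element of ℬ_i for every i with 1 ≤ i ≤ r−1, and at least one element of 𝒞_i for every i ∈ {1,…,r} such that either i = 1 and d_1 ≥ 2, or i ≥ 2 and d_i − d_{i−1} ≥ 2. Then S(X,P) ∪ U generates the monoid Σ(X,P). -/

import Mathlib

open Function Set

/-- The monoid (as a subset of `Function.End X`) of all transformations preserving
the partition induced by the equivalence relation `r`. -/
def TSet {X : Type*} (r : Setoid X) : Set (Function.End X) :=
  {f | ∀ x y : X, r x y → r (f x) (f y)}

/-- The group of units of `TSet r` (i.e. `S(X,P)`): the permutations `g` of `X` with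
`x ∼ y ↔ g x ∼ g y`. -/
def SXP {X : Type*} (r : Setoid X) : Set (Function.End X) :=
  {f | Function.Bijective f ∧ ∀ x y : X, r (f x) (f y) ↔ r x y}

/-- The submonoid (as a subset) of transformations preserving the partition whose
image meets every block of the partition. -/
def SigmaSet {X : Type*} (r : Setoid X) : Set (Function.End X) :=
  {f | f ∈ TSet r ∧ ∀ B ∈ Setoid.classes r, (Set.range f ∩ B).Nonempty}

/-- The number of blocks of the partition having size `s`. -/
noncomputable def blockCount {X : Type*} (r : Setoid X) (s : ℕ) : ℕ :=
  {B | B ∈ Setoid.classes r ∧ B.ncard = s}.ncard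

/-- Membership in `ℬᵢ`, where `a = dᵢ` and `b = d_{i+1}` are consecutive distinct
block sizes: `f ∈ Σ(X,P)`, and there are blocks `B, B'` of size `a` and `C, C'`
of size `b` such that `f` maps `B` injectively into `C`, maps `C'` onto `B'`, and
maps every other block bijectively onto a block of the same size. -/
def memB {X : Type*} (r : Setoid X) (a b : ℕ) (f : Function.End X) : Prop :=
  f ∈ SigmaSet r ∧
    ∃ B B' C C' : Set X,
      B ∈ Setoid.classes r ∧ B' ∈ Setoid.classes r ∧
      C ∈ Setoid.classes r ∧ C' ∈ Setoid.classes r ∧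
      B.ncard = a ∧ B'.ncard = a ∧ C.ncard = b ∧ C'.ncard = b ∧
      Set.InjOn f B ∧ f '' B ⊆ C ∧ f '' C' = B' ∧
      ∀ D ∈ Setoid.classes r, D ≠ B → D ≠ C' →
        ∃ E ∈ Setoid.classes r, f '' D = E ∧ Set.InjOn f D ∧ E.ncard = D.ncard

/-- Membership in `𝒞ᵢ`, where `s = dᵢ` is a block size: `f ∈ Σ(X,P)`, `f` maps
every block into a block of the same size, there is one block of size `s` whose
image under `f` has size `s - 1`, and `f` is injective on every other block. -/
def memC {X : Type*} (r : Setoid X) (s : ℕ) (f : Function.End X) : Prop :=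
  f ∈ SigmaSet r ∧
    (∀ D ∈ Setoid.classes r, ∃ E ∈ Setoid.classes r, E.ncard = D.ncard ∧ f '' D ⊆ E) ∧
    ∃ B ∈ Setoid.classes r, B.ncard = s ∧ (f '' B).ncard = s - 1 ∧
      ∀ D ∈ Setoid.classes r, D ≠ B → Set.InjOn f D

/-! The blocks of the partition are indexed by `Quotient r`. An element of `Σ(X,P)` permutes them,
so `Σ(X,P)` is the disjoint union of the fibres over the permutations `π` of `Quotient r`. Let `M`
be a submonoid containing `S(X,P)` and the given elements.

The fibre over `1` lies in `M`: by repeatedly splitting off idempotents that identify two points of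
a block, every element of that fibre is a product of a unit and such idempotents, and up to
conjugation by units there is one idempotent for each block size `s ≥ 2`. It comes from `𝒞` by
multiplying with a unit; if `s - 1` is also a block size, it comes instead from `f u f` with `f ∈ ℬ`
and a unit `u` chosen so that the only loss occurs on the block that `f` shrinks.

If `t ∈ M` is on each block injective or onto the target block, then every other `f` in its fibre is
`h t e` with `h`, `e` in the fibre over `1`. So the fibres over size-preserving permutations and
over the permutations induced by elements of `ℬ` lie in `M`. Finally, a map over `ρ σ` factors
through maps over `ρ` and `σ` as soon as no block passes through a block smaller than both its
source and its target, and every permutation is a product of size-preserving ones and swaps of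
blocks of consecutive sizes in which only such factorizations occur. -/

section WeightedPermutations

open Equiv

variable {Q α : Type*}

theorem exists_weight_preserving_perm (w : Q → α) {p q p' q' : Q} (hpq : p ≠ q) (hpq' : p' ≠ q')
    (hp : w p = w p') (hq : w q = w q') :
    ∃ τ : Perm Q, τ p = p' ∧ τ q = q' ∧ ∀ s, w (τ s) = w s := by
  classical
  have hw : ∀ s, w (swap p p' s) = w s := apply_swap_eq_self hp
  have hne : p' ≠ swap p p' q := fun h =>
    hpq ((swap p p').injective ((swap_apply_left p p').trans h))
  refine ⟨swap (swap p p' q) q' * swap p p', ?_, ?_, fun s => ?_⟩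
  · rw [Perm.mul_apply, swap_apply_left, swap_apply_of_ne_of_ne hne hpq']
  · rw [Perm.mul_apply, swap_apply_left]
  · rw [Perm.mul_apply, apply_swap_eq_self ((hw q).trans hq), hw]

variable [DecidableEq Q] [LinearOrder α] [Finite Q] {w : Q → α} {motive : Perm Q → Prop}

theorem swap_induction_of_weight
    (mul : ∀ ρ σ, motive ρ → motive σ → (∀ q, min (w q) (w (ρ (σ q))) ≤ w (σ q)) → motive (ρ * σ))
    (adjacent : ∀ p q, w p < w q → (∀ s, w s ≤ w p ∨ w q ≤ w s) → motive (swap p q))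
    {p q : Q} (hpq : w p < w q) : motive (swap p q) := by
  induction hn : {s | w p < w s ∧ w s < w q}.ncard using Nat.strong_induction_on
    generalizing p q with
  | _ n ih =>
  subst hn
  by_cases hadj : ∀ s, w s ≤ w p ∨ w q ≤ w s
  · exact adjacent p q hpq hadj
  push Not at hadj
  obtain ⟨s, hps, hsq⟩ := hadj
  have hps' : motive (swap p s) := by
    refine ih _ (Set.ncard_lt_ncard ⟨fun x hx => ⟨hx.1, hx.2.trans hsq⟩, fun h => ?_⟩) hps rfl
    exact (h (show s ∈ _ from ⟨hps, hsq⟩)).2.false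
  have hsq' : motive (swap s q) := by
    refine ih _ (Set.ncard_lt_ncard ⟨fun x hx => ⟨hps.trans hx.1, hx.2⟩, fun h => ?_⟩) hsq rfl
    exact (h (show s ∈ _ from ⟨hps, hsq⟩)).1.false
  have hne : p ≠ s ∧ p ≠ q :=
    ⟨fun h => hps.ne (congrArg w h), fun h => hpq.ne (congrArg w h)⟩
  rw [swap_comm, ← swap_mul_swap_mul_swap hne.1 hne.2, mul_assoc]
  refine mul _ _ hsq' (mul _ _ hps' hsq' fun x => ?_) fun x => ?_ <;>
  · simp only [Perm.mul_apply, swap_apply_def]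
    grind

theorem perm_induction_of_weight
    (preserving : ∀ π : Perm Q, (∀ q, w (π q) = w q) → motive π)
    (adjacent : ∀ p q, w p < w q → (∀ s, w s ≤ w p ∨ w q ≤ w s) → motive (swap p q))
    (mul : ∀ ρ σ, motive ρ → motive σ → (∀ q, min (w q) (w (ρ (σ q))) ≤ w (σ q)) → motive (ρ * σ))
    (π : Perm Q) : motive π := by
  have := Fintype.ofFinite Q
  induction hn : π.support.card using Nat.strong_induction_on generalizing π with
  | _ n ih =>
  subst hn
  obtain rfl | hπ := eq_or_ne π 1
  · exact preserving 1 fun _ => rfl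
  -- Splitting off a swap at a lightest moved element `q` makes the size condition automatic.
  obtain ⟨q, hq, hmin⟩ := π.support.exists_min_image w
    (Finset.nonempty_iff_ne_empty.2 (mt Perm.support_eq_empty_iff.1 hπ))
  obtain ⟨p, rfl⟩ := π.surjective q
  have hpq : π (π p) ≠ π p := Perm.mem_support.1 hq
  have hle : w (π p) ≤ w p := hmin p (Perm.mem_support.2 fun h => hpq (congrArg π h))
  have hfactor : π = swap (π p) (π (π p)) * π * swap (π p) p := by
    rw [← mul_swap_eq_swap_mul, swap_comm, mul_swap_mul_self]
  have hswap : motive (swap (π p) p) := by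
    obtain hlt | heq := hle.lt_or_eq
    · exact swap_induction_of_weight mul adjacent hlt
    · exact preserving _ (apply_swap_eq_self heq)
  rw [hfactor]
  refine mul _ _ (ih _ (Perm.card_support_swap_mul hpq) _ rfl) hswap fun x => ?_
  rw [← Perm.mul_apply, ← hfactor]
  obtain rfl | hx := eq_or_ne x p
  · rw [swap_apply_right]
    exact min_le_right _ _
  obtain rfl | hx' := eq_or_ne x (π p)
  · rw [swap_apply_left]
    exact min_le_of_left_le hle
  · rw [swap_apply_of_ne_of_ne hx' hx]
    exact min_le_left _ _

end WeightedPermutations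

section Blocks

variable {X : Type*} {r : Setoid X}

/-- The block of the partition with index `q`. -/
def block (r : Setoid X) (q : Quotient r) : Set X := {x | Quotient.mk r x = q}

/-- The size of the block with index `q`; it is `0` if that block is infinite. -/
noncomputable def blockSize (r : Setoid X) (q : Quotient r) : ℕ := (block r q).ncard

theorem block_nonempty (q : Quotient r) : (block r q).Nonempty := Quotient.exists_rep q

theorem block_injective : Injective (block r) := fun p q h => by
  obtain ⟨x, hx⟩ := block_nonempty p
  exact hx.symm.trans (h ▸ hx : x ∈ block r q)

theorem mem_classes_iff_exists_block {B : Set X} : B ∈ r.classes ↔ ∃ q, block r q = B := by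
  have hblock (x : X) : block r (Quotient.mk r x) = {y | r y x} := Set.ext fun _ => Quotient.eq
  constructor
  · rintro ⟨x, rfl⟩
    exact ⟨_, hblock x⟩
  · rintro ⟨q, rfl⟩
    obtain ⟨x, rfl⟩ := Quotient.exists_rep q
    exact ⟨x, hblock x⟩

theorem block_mem_classes (q : Quotient r) : block r q ∈ r.classes :=
  mem_classes_iff_exists_block.2 ⟨q, rfl⟩

theorem blockCount_ne_zero_iff [Finite X] {s : ℕ} :
    blockCount r s ≠ 0 ↔ ∃ q, blockSize r q = s := by
  rw [blockCount, ← Nat.pos_iff_ne_zero, Set.ncard_pos]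
  constructor
  · rintro ⟨B, hB, hs⟩
    obtain ⟨q, rfl⟩ := mem_classes_iff_exists_block.1 hB
    exact ⟨q, hs⟩
  · rintro ⟨q, hq⟩
    exact ⟨_, block_mem_classes q, hq⟩

theorem one_lt_blockSize [Finite X] {x y : X} (hxy : x ≠ y)
    (h : Quotient.mk r x = Quotient.mk r y) : 1 < blockSize r (Quotient.mk r x) :=
  (Set.one_lt_ncard (Set.toFinite _)).2 ⟨x, rfl, y, h.symm, hxy⟩

end Blocks

section Fibers

variable {X : Type*} {r : Setoid X} {f g : Function.End X} {π ρ σ : Equiv.Perm (Quotient r)}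

/-- The transformations that induce the permutation `π` on the blocks, i.e. the fibre over `π` of
the homomorphism from `Σ(X,P)` to the permutations of the blocks. -/
def sigmaFiber (r : Setoid X) (π : Equiv.Perm (Quotient r)) : Set (Function.End X) :=
  {f | ∀ x, Quotient.mk r (f x) = π (Quotient.mk r x)}

theorem mul_mem_sigmaFiber (hf : f ∈ sigmaFiber r ρ) (hg : g ∈ sigmaFiber r σ) :
    f * g ∈ sigmaFiber r (ρ * σ) := fun x =>
  (hf (g x)).trans (congrArg ρ (hg x))

theorem mapsTo_block (hf : f ∈ sigmaFiber r π) (q : Quotient r) :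
    MapsTo f (block r q) (block r (π q)) := fun x hx =>
  (hf x).trans (congrArg π hx)

theorem apply_eq_of_image_subset (hf : f ∈ sigmaFiber r π) {p q : Quotient r}
    (h : f '' block r p ⊆ block r q) : π p = q := by
  obtain ⟨x, hx⟩ := block_nonempty p
  exact (mapsTo_block hf p hx).symm.trans (h ⟨x, hx, rfl⟩)

theorem quotient_eq_of_apply_eq (hf : f ∈ sigmaFiber r π) {x y : X} (h : f x = f y) :
    Quotient.mk r x = Quotient.mk r y :=
  π.injective (by rw [← hf, ← hf, h])

theorem mem_SigmaSet_iff_exists_sigmaFiber [Finite X] :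
    f ∈ SigmaSet r ↔ ∃ π, f ∈ sigmaFiber r π := by
  constructor
  · rintro ⟨hT, hmeet⟩
    have hsurj : Surjective (Quotient.map f hT : Quotient r → Quotient r) := fun q => by
      obtain ⟨_, ⟨x, rfl⟩, hx⟩ := hmeet _ (block_mem_classes q)
      exact ⟨Quotient.mk r x, hx⟩
    exact ⟨Equiv.ofBijective _ (Finite.injective_iff_bijective.1
      (Finite.injective_iff_surjective.2 hsurj)), fun _ => rfl⟩
  · rintro ⟨π, hf⟩
    refine ⟨fun x y hxy => Quotient.exact ?_, fun B hB => ?_⟩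
    · rw [hf, hf, Quotient.sound hxy]
    · obtain ⟨q, rfl⟩ := mem_classes_iff_exists_block.1 hB
      obtain ⟨x, hx⟩ := block_nonempty (π.symm q)
      exact ⟨f x, ⟨x, rfl⟩, π.apply_symm_apply q ▸ mapsTo_block hf _ hx⟩

theorem coe_perm_mem_SXP {u : Equiv.Perm X} (hu : ⇑u ∈ sigmaFiber r π) : ⇑u ∈ SXP r :=
  ⟨u.bijective, fun x y => ⟨fun h => Quotient.exact (π.injective (by
    rw [← hu x, ← hu y, Quotient.sound h])), fun h => Quotient.exact (by
    rw [hu x, hu y, Quotient.sound h])⟩⟩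

theorem coe_perm_symm_mem_SXP {u : Equiv.Perm X} (hu : ⇑u ∈ sigmaFiber r π) :
    ⇑u.symm ∈ SXP r :=
  coe_perm_mem_SXP (π := π.symm) fun x => by
    rw [Equiv.eq_symm_apply, ← hu, Equiv.apply_symm_apply]

/-- The monoid `Σ(X,P)`. -/
def sigmaSubmonoid (r : Setoid X) : Submonoid (Function.End X) where
  carrier := SigmaSet r
  one_mem' := ⟨fun _ _ h => h, fun B hB => by
    obtain ⟨x, hx⟩ := Setoid.nonempty_of_mem_partition (Setoid.isPartition_classes r) hB
    exact ⟨x, ⟨x, rfl⟩, hx⟩⟩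
  mul_mem' := by
    rintro f g ⟨hfT, hf⟩ ⟨hgT, hg⟩
    refine ⟨fun x y h => hfT _ _ (hgT x y h), fun B hB => ?_⟩
    obtain ⟨_, ⟨x, rfl⟩, hx⟩ := hf B hB
    obtain ⟨_, ⟨z, rfl⟩, hz⟩ := hg _ (r.mem_classes x)
    obtain ⟨y, rfl⟩ := hB
    exact ⟨f (g z), ⟨z, rfl⟩, r.trans (hfT _ _ hz) hx⟩

theorem SXP_subset_SigmaSet : SXP r ⊆ SigmaSet r := fun f hf =>
  ⟨fun x y h => (hf.2 x y).2 h, fun B hB => by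
    rw [hf.1.surjective.range_eq, univ_inter]
    exact Setoid.nonempty_of_mem_partition (Setoid.isPartition_classes r) hB⟩

end Fibers

section Factorization

variable {X : Type*} {r : Setoid X} {f g t : Function.End X} {π ρ σ : Equiv.Perm (Quotient r)}

theorem exists_eq_mul_of_factorsThrough (hf : f ∈ sigmaFiber r (ρ * σ)) (hg : g ∈ sigmaFiber r σ)
    (h : FactorsThrough f g) : ∃ h ∈ sigmaFiber r ρ, f = h * g := by
  let k : Function.End X := extend g f fun y => (ρ (Quotient.mk r y)).out
  have hkg (x : X) : k (g x) = f x := h.extend_apply _ x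
  refine ⟨k, fun y => ?_, funext fun x => (hkg x).symm⟩
  by_cases hy : ∃ x, g x = y
  · obtain ⟨x, rfl⟩ := hy
    rw [hkg, hf, hg, Equiv.Perm.mul_apply]
  · exact (congrArg (Quotient.mk r) (extend_apply' _ _ _ hy)).trans (Quotient.out_eq _)

open scoped Pointwise in
theorem sigmaFiber_mul_subset [Finite X]
    (h : ∀ q, min (blockSize r q) (blockSize r (ρ (σ q))) ≤ blockSize r (σ q)) :
    sigmaFiber r (ρ * σ) ⊆ sigmaFiber r ρ * sigmaFiber r σ := by
  intro f hf
  have hembed (q : Quotient r) : ∃ j : X → X, MapsTo j (f '' block r q) (block r (σ q)) ∧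
      InjOn j (f '' block r q) := by
    have hcard : (f '' block r q).ncard ≤ blockSize r (σ q) :=
      (le_min (ncard_image_le (toFinite _))
        (ncard_le_ncard (mapsTo_block hf q).image_subset (toFinite _))).trans (h q)
    have : Nonempty X := ⟨(block_nonempty q).some⟩
    refine (toFinite (f '' block r q)).exists_injOn_of_encard_le (t := block r (σ q)) ?_
    rw [← (toFinite _).cast_ncard_eq, ← (toFinite _).cast_ncard_eq]
    exact_mod_cast hcard
  choose j hjmaps hjinj using hembed
  let g : Function.End X := fun x => j (Quotient.mk r x) (f x)
  have hg : g ∈ sigmaFiber r σ := fun x => hjmaps _ ⟨x, rfl, rfl⟩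
  have hfactor : FactorsThrough f g := fun x y hxy => by
    have hq := quotient_eq_of_apply_eq hg hxy
    refine hjinj (Quotient.mk r x) ⟨x, rfl, rfl⟩ ⟨y, hq.symm, rfl⟩ (hxy.trans ?_)
    rw [hq]
  obtain ⟨k, hk, hfk⟩ := exists_eq_mul_of_factorsThrough hf hg hfactor
  exact hfk ▸ mul_mem_mul hk hg

theorem exists_eq_mul_mul_of_injOn_or_surjOn (hf : f ∈ sigmaFiber r π) (ht : t ∈ sigmaFiber r π)
    (h : ∀ q, InjOn t (block r q) ∨ SurjOn t (block r q) (block r (π q))) :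
    ∃ g ∈ sigmaFiber r 1, ∃ e ∈ sigmaFiber r 1, f = g * (t * e) := by
  have hpoint (x : X) : ∃ z, Quotient.mk r z = Quotient.mk r x ∧
      (InjOn t (block r (Quotient.mk r x)) → z = x) ∧
      (¬ InjOn t (block r (Quotient.mk r x)) → t z = f x) := by
    by_cases hinj : InjOn t (block r (Quotient.mk r x))
    · exact ⟨x, rfl, fun _ => rfl, fun h => (h hinj).elim⟩
    · obtain ⟨z, hz, hzx⟩ := (h _).resolve_left hinj (hf x)
      exact ⟨z, hz, fun h => (hinj h).elim, fun _ => hzx⟩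
  obtain ⟨e, he⟩ : ∃ e : Function.End X, _ := Classical.axiom_of_choice hpoint
  choose he heinj hesurj using he
  have hte : t * e ∈ sigmaFiber r π := mul_mem_sigmaFiber (σ := 1) ht he
  have hfactor : FactorsThrough f (t * e) := fun x y hxy => by
    have hq := quotient_eq_of_apply_eq hte hxy
    change t (e x) = t (e y) at hxy
    by_cases hinj : InjOn t (block r (Quotient.mk r x))
    · rw [heinj x hinj, heinj y (hq ▸ hinj)] at hxy
      rw [hinj rfl hq.symm hxy]
    · rwa [hesurj x hinj, hesurj y (hq ▸ hinj)] at hxy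
  obtain ⟨g, hg, hfg⟩ := exists_eq_mul_of_factorsThrough (ρ := 1) hf hte hfactor
  exact ⟨g, hg, e, he, hfg⟩

end Factorization

section Units

variable {X : Type*} [Finite X] {r : Setoid X} {f : Function.End X} {π : Equiv.Perm (Quotient r)}

theorem exists_block_equiv_extending {p q : Quotient r} {A : Set X}
    (hsize : blockSize r p = blockSize r q) (hmaps : MapsTo f (A ∩ block r p) (block r q))
    (hinj : InjOn f (A ∩ block r p)) :
    ∃ e : block r p ≃ block r q, ∀ x : block r p, (x : X) ∈ A → (e x : X) = f x := by
  classical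
  have := Fintype.ofFinite X
  have hcard : Fintype.card (block r p) = (block r q).toFinset.card := by
    rw [← toFinset_card, ← ncard_eq_toFinset_card', ← ncard_eq_toFinset_card']
    exact hsize
  obtain ⟨e, he⟩ := MapsTo.exists_equiv_extend_of_card_eq hcard
    (s := {x : block r p | (x : X) ∈ A}) (f := fun x => f x)
    (fun x hx => by simpa using hmaps ⟨hx, x.2⟩)
    (fun x hx y hy hxy => Subtype.ext (hinj ⟨hx, x.2⟩ ⟨hy, y.2⟩ hxy))
  exact ⟨e.trans (Equiv.subtypeEquivRight fun _ => mem_toFinset), he⟩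

theorem exists_perm_mem_sigmaFiber_extending (hsize : ∀ q, blockSize r (π q) = blockSize r q)
    {A : Set X} (hf : ∀ x ∈ A, Quotient.mk r (f x) = π (Quotient.mk r x)) (hinj : InjOn f A) :
    ∃ u : Equiv.Perm X, ⇑u ∈ sigmaFiber r π ∧ EqOn u f A := by
  choose e he using fun q => exists_block_equiv_extending (hsize q).symm
    (fun x hx => (hf x hx.1).trans (congrArg π hx.2))
    (hinj.mono (inter_subset_left (t := block r q)))
  let blocks : (Σ q, block r q) ≃ X := Equiv.sigmaFiberEquiv (Quotient.mk r)
  exact ⟨blocks.symm.trans ((Equiv.sigmaCongr π e).trans blocks),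
    fun x => (e (Quotient.mk r x) ⟨x, rfl⟩).2, fun x hx => he _ ⟨x, rfl⟩ hx⟩

theorem exists_perm_mem_sigmaFiber (hsize : ∀ q, blockSize r (π q) = blockSize r q) :
    ∃ u : Equiv.Perm X, ⇑u ∈ sigmaFiber r π :=
  (exists_perm_mem_sigmaFiber_extending (f := 1) hsize (A := ∅) (by simp) (injOn_empty _)).imp
    fun _ hu => hu.1

end Units

section Collapse

variable {X : Type*} [DecidableEq X] {a b x : X}

/-- The idempotent that sends `a` to `b` and fixes all other points. -/
def collapse (a b : X) : Function.End X := update id a b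

theorem collapse_self : collapse a b a = b := update_self ..

theorem collapse_of_ne (h : x ≠ a) : collapse a b x = x := update_of_ne h ..

end Collapse

section TrivialFiber

variable {X : Type*} {r : Setoid X} {f g : Function.End X} {π : Equiv.Perm (Quotient r)}
  {M : Submonoid (Function.End X)} {a b x y : X}

theorem mem_of_unit_apply_eq (hS : SXP r ⊆ M) {u : Equiv.Perm X} (hu : ⇑u ∈ sigmaFiber r π)
    (hf : f ∈ M) (h : ∀ x, u (g x) = f x) : g ∈ M := by
  convert M.mul_mem (hS (coe_perm_symm_mem_SXP hu)) hf
  exact funext fun x => (u.eq_symm_apply.2 (h x))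

variable [Finite X]

theorem exists_notMem_range (hf : f ∈ sigmaFiber r 1) (hab : a ≠ b) (hfab : f a = f b) :
    ∃ c, Quotient.mk r c = Quotient.mk r a ∧ c ∉ range f := by
  have hinj : ¬ InjOn f (block r (Quotient.mk r a)) := fun h =>
    hab (h rfl (quotient_eq_of_apply_eq hf hfab).symm hfab)
  have hcard : (f '' block r (Quotient.mk r a)).ncard < (block r (Quotient.mk r a)).ncard :=
    (ncard_image_le (toFinite _)).lt_of_ne (mt injOn_of_ncard_image_eq hinj)
  obtain ⟨c, hc, hcn⟩ := exists_mem_notMem_of_ncard_lt_ncard hcard (toFinite _)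
  refine ⟨c, hc, ?_⟩
  rintro ⟨x, rfl⟩
  exact hcn ⟨x, (hf x).symm.trans hc, rfl⟩

variable [DecidableEq X]

theorem collapse_mem_of_injOn_compl (hS : SXP r ⊆ M) (hfM : f ∈ M) (hf : f ∈ sigmaFiber r π)
    (hsize : ∀ q, blockSize r (π q) = blockSize r q) (hab : a ≠ b) (hfab : f a = f b)
    (hinj : InjOn f {a}ᶜ) : collapse a b ∈ M := by
  obtain ⟨u, hu, huf⟩ := exists_perm_mem_sigmaFiber_extending hsize (fun x _ => hf x) hinj
  refine mem_of_unit_apply_eq hS hu hfM fun x => ?_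
  obtain rfl | hx := eq_or_ne x a
  · rw [collapse_self, huf hab.symm, hfab]
  · rw [collapse_of_ne hx, huf hx]

theorem collapse_mem_of_blockSize_eq (hS : SXP r ⊆ M) (hM : collapse a b ∈ M) (hab : a ≠ b)
    (hr : Quotient.mk r a = Quotient.mk r b) (hxy : x ≠ y) (hr' : Quotient.mk r x = Quotient.mk r y)
    (hsize : blockSize r (Quotient.mk r x) = blockSize r (Quotient.mk r a)) :
    collapse x y ∈ M := by
  classical
  obtain ⟨u, hu, hup⟩ : ∃ u : Equiv.Perm X,
      ⇑u ∈ sigmaFiber r (Equiv.swap (Quotient.mk r x) (Quotient.mk r a)) ∧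
      EqOn u (fun z => if z = x then a else b) {x, y} := by
    refine exists_perm_mem_sigmaFiber_extending (Equiv.apply_swap_eq_self hsize) ?_ ?_
    · rintro z (rfl | rfl)
      · rw [if_pos rfl, Equiv.swap_apply_left]
      · rw [if_neg hxy.symm, ← hr', Equiv.swap_apply_left, hr]
    · rw [injOn_pair]
      simp [hxy.symm, hab]
  have hux : u x = a := by simpa using hup (mem_insert x {y})
  have huy : u y = b := by simpa [hxy.symm] using hup (mem_insert_of_mem x rfl)
  refine mem_of_unit_apply_eq hS hu (M.mul_mem hM (hS (coe_perm_mem_SXP hu))) fun z => ?_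
  change u (collapse x y z) = collapse a b (u z)
  obtain rfl | hz := eq_or_ne z x
  · rw [collapse_self, hux, collapse_self, huy]
  · rw [collapse_of_ne hz, collapse_of_ne (hux ▸ u.injective.ne hz)]

theorem sigmaFiber_one_subset (hS : SXP r ⊆ M)
    (hcollapse : ∀ x y : X, x ≠ y → Quotient.mk r x = Quotient.mk r y → collapse x y ∈ M) :
    sigmaFiber r 1 ⊆ M := by
  intro f hf
  induction hn : (range f)ᶜ.ncard using Nat.strong_induction_on generalizing f with
  | _ n ih =>
  subst hn
  by_cases hinj : Injective f
  · exact hS (coe_perm_mem_SXP (u := .ofBijective f (Finite.injective_iff_bijective.1 hinj)) hf)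
  simp only [Injective, not_forall] at hinj
  obtain ⟨a, b, hfab, hab⟩ := hinj
  obtain ⟨c, hc, hcf⟩ := exists_notMem_range hf hab hfab
  -- Redirecting `a` to the missed point `c` enlarges the image, and `f` first moves `a` to `b`.
  let g : Function.End X := update f a c
  have hga : g a = c := update_self ..
  have hg {x : X} (hx : x ≠ a) : g x = f x := update_of_ne hx ..
  have hfg : f = g * collapse a b := funext fun x => by
    change f x = g (collapse a b x)
    obtain rfl | hx := eq_or_ne x a
    · rw [collapse_self, hg (Ne.symm hab), hfab]
    · rw [collapse_of_ne hx, hg hx]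
  have hgfiber : g ∈ sigmaFiber r 1 := fun x => by
    obtain rfl | hx := eq_or_ne x a
    · rw [hga, hc, Equiv.Perm.one_apply]
    · rw [hg hx, hf]
  have hrange : (range g)ᶜ ⊂ (range f)ᶜ := by
    refine compl_lt_compl_iff_lt.2 ((ssubset_iff_of_subset ?_).2 ⟨c, ⟨a, hga⟩, hcf⟩)
    rw [hfg]
    exact range_comp_subset_range (collapse a b) g
  rw [hfg]
  exact M.mul_mem (ih _ (ncard_lt_ncard hrange) hgfiber rfl)
    (hcollapse a b hab (quotient_eq_of_apply_eq hf hfab))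

end TrivialFiber

section Generators

variable {X : Type*} {r : Setoid X} {f : Function.End X} {π : Equiv.Perm (Quotient r)}

/-- The elements of `𝒞`, read through the permutation `π` they induce on the blocks: `f` maps blocks
into blocks of the same size, its image of `C` misses exactly one point of the target block, and it
is injective on all other blocks. -/
structure IsBlockContraction (r : Setoid X) (f : Function.End X) (π : Equiv.Perm (Quotient r))
    (C : Quotient r) : Prop where
  mem_sigmaFiber : f ∈ sigmaFiber r π
  size_apply : ∀ q, blockSize r (π q) = blockSize r q
  ncard_image_add_one : (f '' block r C).ncard + 1 = blockSize r C
  injOn : ∀ q, q ≠ C → InjOn f (block r q)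

/-- The elements of `ℬ`, read through the permutation `π` they induce on the blocks: `f` maps `C`
onto a block of the size of `B`, maps `B` injectively into a block of the size of `C`, and maps all
other blocks bijectively onto blocks of the same size. -/
structure IsBlockExchange (r : Setoid X) [DecidableEq (Quotient r)] (f : Function.End X)
    (π : Equiv.Perm (Quotient r)) (B C : Quotient r) : Prop where
  mem_sigmaFiber : f ∈ sigmaFiber r π
  size_apply : ∀ q, blockSize r (π q) = blockSize r (Equiv.swap B C q)
  injOn : ∀ q, q ≠ C → InjOn f (block r q)
  surjOn : SurjOn f (block r C) (block r (π C))

theorem memC.exists_isBlockContraction [Finite X] {s : ℕ} (hf : memC r s f) (hs : s ≠ 0) :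
    ∃ π C, IsBlockContraction r f π C ∧ blockSize r C = s := by
  obtain ⟨hfS, hsize, B, hB, hBs, hBimage, hinj⟩ := hf
  obtain ⟨π, hfπ⟩ := mem_SigmaSet_iff_exists_sigmaFiber.1 hfS
  obtain ⟨C, rfl⟩ := mem_classes_iff_exists_block.1 hB
  refine ⟨π, C, ⟨hfπ, fun q => ?_, ?_, fun q hq => ?_⟩, hBs⟩
  · obtain ⟨E, hE, hEsize, hsub⟩ := hsize _ (block_mem_classes q)
    obtain ⟨p, rfl⟩ := mem_classes_iff_exists_block.1 hE
    rwa [apply_eq_of_image_subset hfπ hsub]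
  · rw [blockSize, hBs, hBimage]
    lia
  · exact hinj _ (block_mem_classes q) (block_injective.ne hq)

theorem memB.exists_isBlockExchange [Finite X] [DecidableEq (Quotient r)] {a b : ℕ}
    (hf : memB r a b f) :
    ∃ π B C, IsBlockExchange r f π B C ∧ blockSize r B = a ∧ blockSize r C = b := by
  obtain ⟨hfS, _, _, _, _, hB, hB', hC, hC', sB, sB', sC, sC', hinj, hBC, hCB, hrest⟩ := hf
  obtain ⟨π, hfπ⟩ := mem_SigmaSet_iff_exists_sigmaFiber.1 hfS
  obtain ⟨B, rfl⟩ := mem_classes_iff_exists_block.1 hB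
  obtain ⟨B', rfl⟩ := mem_classes_iff_exists_block.1 hB'
  obtain ⟨C, rfl⟩ := mem_classes_iff_exists_block.1 hC
  obtain ⟨C', rfl⟩ := mem_classes_iff_exists_block.1 hC'
  obtain rfl := apply_eq_of_image_subset hfπ hBC
  obtain rfl := apply_eq_of_image_subset hfπ hCB.subset
  have hother (q : Quotient r) (hqB : q ≠ B) (hqC : q ≠ C') :
      blockSize r (π q) = blockSize r q ∧ InjOn f (block r q) := by
    obtain ⟨E, hE, himage, hqinj, hsize⟩ :=
      hrest _ (block_mem_classes q) (block_injective.ne hqB) (block_injective.ne hqC)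
    obtain ⟨p, rfl⟩ := mem_classes_iff_exists_block.1 hE
    exact ⟨apply_eq_of_image_subset hfπ himage.subset ▸ hsize, hqinj⟩
  refine ⟨π, B, C', ⟨hfπ, fun q => ?_, fun q hq => ?_, hCB.superset⟩, sB, sC'⟩
  · obtain rfl | hqB := eq_or_ne q B
    · rw [Equiv.swap_apply_left]
      exact sC.trans sC'.symm
    obtain rfl | hqC := eq_or_ne q C'
    · rw [Equiv.swap_apply_right]
      exact sB'.trans sB.symm
    · rw [Equiv.swap_apply_of_ne_of_ne hqB hqC, (hother q hqB hqC).1]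
  · obtain rfl | hqB := eq_or_ne q B
    · exact hinj
    · exact (hother q hqB hq).2

variable {τ : Equiv.Perm (Quotient r)} {B C : Quotient r} {M : Submonoid (Function.End X)}

theorem IsBlockExchange.mul_mul_isBlockContraction [DecidableEq (Quotient r)]
    {u : Function.End X} (hf : IsBlockExchange r f π B C) (hBC : blockSize r C = blockSize r B + 1)
    (hu : u ∈ sigmaFiber r τ) (huinj : Injective u) (hinj : InjOn f (u '' (f '' block r B)))
    (hτ : ∀ q, blockSize r (τ q) = blockSize r q) (hτB : τ (π B) = C) (hτC : τ (π C) = B) :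
    IsBlockContraction r (f * (u * f)) (π * (τ * π)) C := by
  have hne : B ≠ C := fun h => by simp [h] at hBC
  have hτπB {q : Quotient r} : τ (π q) = B ↔ q = C := by
    rw [← hτC, τ.apply_eq_iff_eq, π.apply_eq_iff_eq]
  have hτπC {q : Quotient r} : τ (π q) = C ↔ q = B := by
    rw [← hτB, τ.apply_eq_iff_eq, π.apply_eq_iff_eq]
  refine ⟨mul_mem_sigmaFiber hf.mem_sigmaFiber (mul_mem_sigmaFiber hu hf.mem_sigmaFiber),
    fun q => ?_, ?_, fun q hq => ?_⟩
  · simp only [Equiv.Perm.mul_apply]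
    rw [hf.size_apply]
    obtain rfl | hqB := eq_or_ne q B
    · rw [hτB, Equiv.swap_apply_right]
    obtain rfl | hqC := eq_or_ne q C
    · rw [hτC, Equiv.swap_apply_left]
    · rw [Equiv.swap_apply_of_ne_of_ne (mt hτπB.1 hqC) (mt hτπC.1 hqB), hτ, hf.size_apply,
        Equiv.swap_apply_of_ne_of_ne hqB hqC]
  · have huB : u '' block r (π C) ⊆ block r B := hτC ▸ (mapsTo_block hu (π C)).image_subset
    have himage : (f * (u * f)) '' block r C = f '' (u '' block r (π C)) := by
      rw [← hf.surjOn.image_eq_of_mapsTo (mapsTo_block hf.mem_sigmaFiber C)]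
      exact (image_comp (f ∘ u) f _).trans (image_comp f u _)
    rw [himage, ((hf.injOn B hne).mono huB).ncard_image, ncard_image_of_injective _ huinj, hBC,
      ← blockSize, hf.size_apply, Equiv.swap_apply_right]
  · have hfinj : InjOn f (u '' (f '' block r q)) := by
      obtain rfl | hqB := eq_or_ne q B
      · exact hinj
      · exact (hf.injOn _ (mt hτπC.1 hqB)).mono (((mapsTo_block hu _).mono_left
          (mapsTo_block hf.mem_sigmaFiber q).image_subset).image_subset)
    exact hfinj.comp (huinj.injOn.comp (hf.injOn q hq) (mapsTo_image f _))
      fun x hx => mem_image_of_mem u (mem_image_of_mem f hx)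

variable [Finite X]

theorem exists_eq_and_injOn_sdiff_singleton {α β : Type*} {f : α → β} {s : Set α} (hs : s.Finite)
    (h : (f '' s).ncard + 1 = s.ncard) :
    ∃ a ∈ s, ∃ b ∈ s, a ≠ b ∧ f a = f b ∧ InjOn f (s \ {a}) := by
  have hninj : ¬ InjOn f s := fun hinj => by
    rw [hinj.ncard_image] at h
    lia
  simp only [InjOn, not_forall] at hninj
  obtain ⟨a, ha, b, hb, hfab, hab⟩ := hninj
  have himage : f '' (s \ {a}) = f '' s := by
    refine (image_mono sdiff_subset).antisymm ?_
    rintro _ ⟨x, hx, rfl⟩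
    obtain rfl | hxa := eq_or_ne x a
    · exact ⟨b, ⟨hb, Ne.symm hab⟩, hfab.symm⟩
    · exact ⟨x, ⟨hx, hxa⟩, rfl⟩
  refine ⟨a, ha, b, hb, hab, hfab, injOn_of_ncard_image_eq ?_ hs.sdiff⟩
  rw [himage]
  have := ncard_sdiff_singleton_add_one ha hs
  lia

theorem IsBlockContraction.exists_collapse_mem [DecidableEq X] (hS : SXP r ⊆ M) (hfM : f ∈ M)
    (hf : IsBlockContraction r f π C) :
    ∃ a ∈ block r C, ∃ b ∈ block r C, a ≠ b ∧ collapse a b ∈ M := by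
  obtain ⟨a, ha, b, hb, hab, hfab, hinj⟩ :=
    exists_eq_and_injOn_sdiff_singleton (toFinite _) hf.ncard_image_add_one
  refine ⟨a, ha, b, hb, hab,
    collapse_mem_of_injOn_compl hS hfM hf.mem_sigmaFiber hf.size_apply hab hfab ?_⟩
  intro x hx y hy hxy
  have hq := quotient_eq_of_apply_eq hf.mem_sigmaFiber hxy
  by_cases hC : Quotient.mk r x = C
  · exact hinj ⟨hC, hx⟩ ⟨hq.symm.trans hC, hy⟩ hxy
  · exact hf.injOn _ hC rfl hq.symm hxy

variable [DecidableEq (Quotient r)]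

theorem IsBlockExchange.exists_perm_injOn_image (hf : IsBlockExchange r f π B C)
    (hτ : ∀ q, blockSize r (τ q) = blockSize r q) (hτB : τ (π B) = C) :
    ∃ u : Equiv.Perm X, ⇑u ∈ sigmaFiber r τ ∧ InjOn f (u '' (f '' block r B)) := by
  obtain ⟨A, hAC, hA⟩ := hf.surjOn.exists_bijOn_subset
  have hcard : (f '' block r B).ncard ≤ A.ncard := calc
    (f '' block r B).ncard ≤ blockSize r B := ncard_image_le (toFinite _)
    _ = blockSize r (π C) := by rw [hf.size_apply, Equiv.swap_apply_right]
    _ = A.ncard := by rw [blockSize, ← hA.image_eq, hA.injOn.ncard_image]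
  obtain ⟨j, hjA, hj⟩ : ∃ j : X → X, MapsTo j (f '' block r B) A ∧ InjOn j (f '' block r B) := by
    have : Nonempty X := ⟨(block_nonempty B).some⟩
    refine (toFinite _).exists_injOn_of_encard_le ?_
    rw [← (toFinite _).cast_ncard_eq, ← (toFinite _).cast_ncard_eq]
    exact_mod_cast hcard
  have hjτ : ∀ x ∈ f '' block r B, Quotient.mk r (j x) = τ (Quotient.mk r x) := fun x hx => by
    rw [(mapsTo_block hf.mem_sigmaFiber B).image_subset hx, hτB]
    exact hAC (hjA hx)
  obtain ⟨u, hu, huj⟩ := exists_perm_mem_sigmaFiber_extending hτ hjτ hj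
  exact ⟨u, hu, hA.injOn.mono ((hjA.congr huj.symm).image_subset)⟩

/-- The contraction is `f u f`, where the unit `u` carries the image of `B` to a transversal of the
kernel of `f` on `C`. -/
theorem IsBlockExchange.exists_isBlockContraction (hS : SXP r ⊆ M) (hfM : f ∈ M)
    (hf : IsBlockExchange r f π B C) (hBC : blockSize r C = blockSize r B + 1) :
    ∃ g ∈ M, ∃ ρ, IsBlockContraction r g ρ C := by
  have hne : B ≠ C := fun h => by simp [h] at hBC
  have hπB : blockSize r (π B) = blockSize r C := by rw [hf.size_apply, Equiv.swap_apply_left]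
  have hπC : blockSize r (π C) = blockSize r B := by rw [hf.size_apply, Equiv.swap_apply_right]
  obtain ⟨τ, hτB, hτC, hτ⟩ := exists_weight_preserving_perm (blockSize r) (π.injective.ne hne)
    hne.symm hπB hπC
  obtain ⟨u, hu, hinj⟩ := hf.exists_perm_injOn_image hτ hτB
  exact ⟨_, M.mul_mem hfM (M.mul_mem (hS (coe_perm_mem_SXP hu)) hfM), _,
    hf.mul_mul_isBlockContraction hBC hu u.injective hinj hτ hτB hτC⟩

end Generators

section Generation

variable {X : Type*} {r : Setoid X} {f : Function.End X} {π ρ σ : Equiv.Perm (Quotient r)}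
  {M : Submonoid (Function.End X)}

theorem sigmaFiber_subset_of_injOn_or_surjOn (h1 : sigmaFiber r 1 ⊆ M) (hfM : f ∈ M)
    (hf : f ∈ sigmaFiber r π)
    (h : ∀ q, InjOn f (block r q) ∨ SurjOn f (block r q) (block r (π q))) :
    sigmaFiber r π ⊆ M := by
  intro g hg
  obtain ⟨k, hk, e, he, rfl⟩ := exists_eq_mul_mul_of_injOn_or_surjOn hg hf h
  exact M.mul_mem (h1 hk) (M.mul_mem hfM (h1 he))

variable [Finite X]

theorem sigmaFiber_subset_of_blockSize_apply_eq (hS : SXP r ⊆ M) (h1 : sigmaFiber r 1 ⊆ M)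
    (hsize : ∀ q, blockSize r (π q) = blockSize r q) : sigmaFiber r π ⊆ M := by
  obtain ⟨u, hu⟩ := exists_perm_mem_sigmaFiber hsize
  exact sigmaFiber_subset_of_injOn_or_surjOn h1 (hS (coe_perm_mem_SXP hu)) hu
    fun _ => .inl u.injective.injOn

theorem sigmaFiber_mul_subset_of_subset (hρ : sigmaFiber r ρ ⊆ M) (hσ : sigmaFiber r σ ⊆ M)
    (h : ∀ q, min (blockSize r q) (blockSize r (ρ (σ q))) ≤ blockSize r (σ q)) :
    sigmaFiber r (ρ * σ) ⊆ M :=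
  (sigmaFiber_mul_subset h).trans (Submonoid.mul_subset hρ hσ)

theorem IsBlockExchange.sigmaFiber_swap_subset [DecidableEq (Quotient r)] {B C p q : Quotient r}
    (hS : SXP r ⊆ M) (h1 : sigmaFiber r 1 ⊆ M) (hfM : f ∈ M) (hf : IsBlockExchange r f π B C)
    (hp : blockSize r p = blockSize r B) (hq : blockSize r q = blockSize r C)
    (hpq : blockSize r p ≠ blockSize r q) : sigmaFiber r (Equiv.swap p q) ⊆ M := by
  have hBC : B ≠ C := by
    rintro rfl
    exact hpq (hp.trans hq.symm)
  obtain ⟨τ, rfl, rfl, hτ⟩ := exists_weight_preserving_perm (blockSize r)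
    (ne_of_apply_ne _ hpq) hBC hp hq
  have hπ : sigmaFiber r π ⊆ M := sigmaFiber_subset_of_injOn_or_surjOn h1 hfM hf.mem_sigmaFiber
    fun s => by
      obtain rfl | hs := eq_or_ne s (τ q)
      · exact .inr hf.surjOn
      · exact .inl (hf.injOn s hs)
  let ζ := π * Equiv.swap (τ p) (τ q) * τ
  have hζ (s : Quotient r) : blockSize r (ζ s) = blockSize r s := by
    simp only [ζ, Equiv.Perm.mul_apply, hf.size_apply, Equiv.swap_apply_self, hτ]
  have hζ' (s : Quotient r) : blockSize r (ζ⁻¹ s) = blockSize r s :=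
    (hζ _).symm.trans (congrArg (blockSize r) (ζ.apply_symm_apply s))
  have hfactor : Equiv.swap p q = ζ⁻¹ * (π * τ) := by
    rw [eq_inv_mul_iff_mul_eq]
    simp only [ζ, mul_assoc, Equiv.mul_swap_eq_swap_mul, Equiv.swap_mul_self_mul]
  rw [hfactor]
  refine sigmaFiber_mul_subset_of_subset (sigmaFiber_subset_of_blockSize_apply_eq hS h1 hζ')
    (sigmaFiber_mul_subset_of_subset hπ (sigmaFiber_subset_of_blockSize_apply_eq hS h1 hτ)
      fun s => ?_) fun s => ?_
  · rw [hτ]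
    exact min_le_left _ _
  · rw [hζ']
    exact min_le_right _ _

theorem exists_isBlockContraction_of_memB_of_memC (hS : SXP r ⊆ M)
    (hB : ∀ p q, blockSize r p < blockSize r q →
      (∀ s, blockSize r s ≤ blockSize r p ∨ blockSize r q ≤ blockSize r s) →
      ∃ f ∈ M, memB r (blockSize r p) (blockSize r q) f)
    (hC : ∀ q, 2 ≤ blockSize r q → (∀ p, blockSize r p + 1 ≠ blockSize r q) →
      ∃ f ∈ M, memC r (blockSize r q) f) {q : Quotient r} (hq : 2 ≤ blockSize r q) :
    ∃ f ∈ M, ∃ π C, IsBlockContraction r f π C ∧ blockSize r C = blockSize r q := by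
  classical
  by_cases hpred : ∃ p, blockSize r p + 1 = blockSize r q
  · obtain ⟨p, hp⟩ := hpred
    obtain ⟨f, hfM, hf⟩ := hB p q (by lia) fun s => by lia
    obtain ⟨π, B, C, hπ, hBp, hCq⟩ := hf.exists_isBlockExchange
    obtain ⟨g, hgM, ρ, hρ⟩ := hπ.exists_isBlockContraction hS hfM (by lia)
    exact ⟨g, hgM, ρ, C, hρ, hCq⟩
  · obtain ⟨f, hfM, hf⟩ := hC q hq (not_exists.1 hpred)
    exact ⟨f, hfM, hf.exists_isBlockContraction (by lia)⟩

theorem SigmaSet_subset_of_memB_of_memC (hS : SXP r ⊆ M)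
    (hB : ∀ p q, blockSize r p < blockSize r q →
      (∀ s, blockSize r s ≤ blockSize r p ∨ blockSize r q ≤ blockSize r s) →
      ∃ f ∈ M, memB r (blockSize r p) (blockSize r q) f)
    (hC : ∀ q, 2 ≤ blockSize r q → (∀ p, blockSize r p + 1 ≠ blockSize r q) →
      ∃ f ∈ M, memC r (blockSize r q) f) : SigmaSet r ⊆ M := by
  classical
  have h1 : sigmaFiber r 1 ⊆ M := sigmaFiber_one_subset hS fun x y hxy hr => by
    obtain ⟨f, hfM, π, C, hf, hsize⟩ :=
      exists_isBlockContraction_of_memB_of_memC hS hB hC (one_lt_blockSize hxy hr)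
    obtain ⟨a, rfl, b, hb, hab, hM⟩ := hf.exists_collapse_mem hS hfM
    exact collapse_mem_of_blockSize_eq hS hM hab hb.symm hxy hr hsize.symm
  intro f hf
  obtain ⟨π, hπ⟩ := mem_SigmaSet_iff_exists_sigmaFiber.1 hf
  refine perm_induction_of_weight (w := blockSize r) (motive := fun π => sigmaFiber r π ⊆ M)
    (fun π hsize => sigmaFiber_subset_of_blockSize_apply_eq hS h1 hsize) (fun p q hpq hadj => ?_)
    (fun ρ σ hρ hσ h => sigmaFiber_mul_subset_of_subset hρ hσ h) π hπ
  obtain ⟨g, hgM, hg⟩ := hB p q hpq hadj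
  obtain ⟨ρ, B, C, hρ, hBp, hCq⟩ := hg.exists_isBlockExchange
  exact hρ.sigmaFiber_swap_subset hS h1 hgM hBp.symm hCq.symm hpq.ne

end Generation

theorem eq_add_one_of_strictMonoOn_Icc {α : Type*} [LinearOrder α] {d : ℕ → α} {a b i j : ℕ}
    (hd : StrictMonoOn d (Icc a b)) (hi : i ∈ Icc a b) (hj : j ∈ Icc a b) (hij : d i < d j)
    (hadj : ∀ k ∈ Icc a b, d k ≤ d i ∨ d j ≤ d k) : j = i + 1 := by
  have hlt : i < j := (hd.lt_iff_lt hi hj).1 hij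
  have hk : i + 1 ∈ Icc a b := ⟨hi.1.trans i.le_succ, hlt.trans_le hj.2⟩
  obtain hle | hle := hadj _ hk
  · exact absurd hle (hd hi hk i.lt_succ_self).not_ge
  · exact ((hd.le_iff_le hj hk).1 hle).antisymm hlt

theorem eq_one_or_add_two_le_of_strictMonoOn_Icc {d : ℕ → ℕ} {b i : ℕ}
    (hd : StrictMonoOn d (Icc 1 b)) (hi : i ∈ Icc 1 b) (hdi : 2 ≤ d i)
    (hpred : ∀ j ∈ Icc 1 b, d j + 1 ≠ d i) :
    (i = 1 ∧ 2 ≤ d 1) ∨ (2 ≤ i ∧ d (i - 1) + 2 ≤ d i) := by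
  obtain rfl | hi2 := hi.1.eq_or_lt
  · exact .inl ⟨rfl, hdi⟩
  have hi' : i - 1 ∈ Icc 1 b := ⟨by lia, (i.sub_le 1).trans hi.2⟩
  exact .inr ⟨hi2, Nat.lt_of_le_of_ne (hd hi' hi (by lia)) (hpred _ hi')⟩

/-- (Here `d 1 < … < d R` are the distinct block sizes of the
partition.)  If `U ⊆ Σ(X,P)` contains an element of `ℬᵢ` for every
`1 ≤ i ≤ R − 1`, and an element of `𝒞ᵢ` for every `i ∈ {1, …, R}` with either
`i = 1` and `d 1 ≥ 2`, or `i ≥ 2` and `d i − d (i−1) ≥ 2`, then `S(X,P) ∪ U`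
generates the monoid `Σ(X,P)`. -/
theorem SigmaXP_generated_by_representatives {X : Type*} [Fintype X] [Nonempty X]
    (r : Setoid X)
    (R : ℕ) (d : ℕ → ℕ)
    (hdmono : ∀ i, 1 ≤ i → i + 1 ≤ R → d i < d (i + 1))
    (hdsizes : ∀ s, blockCount r s ≠ 0 ↔ ∃ i, 1 ≤ i ∧ i ≤ R ∧ d i = s)
    (U : Set (Function.End X)) (hU : U ⊆ SigmaSet r)
    (hUB : ∀ i, 1 ≤ i → i + 1 ≤ R → ∃ f ∈ U, memB r (d i) (d (i + 1)) f)
    (hUC : ∀ i, 1 ≤ i → i ≤ R →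
      ((i = 1 ∧ 2 ≤ d 1) ∨ (2 ≤ i ∧ d (i - 1) + 2 ≤ d i)) →
      ∃ f ∈ U, memC r (d i) f) :
    (Submonoid.closure (SXP r ∪ U) : Set (Function.End X)) = SigmaSet r := by
  have hd : StrictMonoOn d (Icc 1 R) :=
    strictMonoOn_of_lt_succ ordConnected_Icc fun i _ hi hi' => hdmono i hi.1 hi'.2
  have hsizes (s : ℕ) : (∃ q, blockSize r q = s) ↔ ∃ i, 1 ≤ i ∧ i ≤ R ∧ d i = s :=
    blockCount_ne_zero_iff.symm.trans (hdsizes s)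
  have hUM : U ⊆ Submonoid.closure (SXP r ∪ U) := subset_union_right.trans Submonoid.subset_closure
  refine Subset.antisymm
    (Submonoid.closure_le (S := sigmaSubmonoid r).2 (union_subset SXP_subset_SigmaSet hU))
    (SigmaSet_subset_of_memB_of_memC (subset_union_left.trans Submonoid.subset_closure)
      (fun p q hpq hadj => ?_) fun q hq hpred => ?_)
  · obtain ⟨i, hi, hiR, hip⟩ := (hsizes _).1 ⟨p, rfl⟩
    obtain ⟨j, hj, hjR, hjq⟩ := (hsizes _).1 ⟨q, rfl⟩
    rw [← hip, ← hjq] at hpq hadj ⊢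
    obtain rfl := eq_add_one_of_strictMonoOn_Icc hd ⟨hi, hiR⟩ ⟨hj, hjR⟩ hpq fun k hk => by
      obtain ⟨s, hs⟩ := (hsizes _).2 ⟨k, hk.1, hk.2, rfl⟩
      exact hs ▸ hadj s
    exact (hUB i hi hjR).imp fun f hf => ⟨hUM hf.1, hf.2⟩
  · obtain ⟨i, hi, hiR, hiq⟩ := (hsizes _).1 ⟨q, rfl⟩
    rw [← hiq] at hq hpred ⊢
    have hgap := eq_one_or_add_two_le_of_strictMonoOn_Icc hd ⟨hi, hiR⟩ hq fun j hj => by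
      obtain ⟨p, hp⟩ := (hsizes _).2 ⟨j, hj.1, hj.2, rfl⟩
      exact hp ▸ hpred p
    exact (hUC i hi hiR hgap).imp fun f hf => ⟨hUM hf.1, hf.2⟩
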